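/- Let G be an abelian group, ℓ a prime, and σ: G → G the inversion map u ↦ u^{-1}. On H_*(G; F_ℓ), the induced map σ_* sends the class of the cycle [ξ]^(s) ∧ ⟨v_1,...,v_i⟩ to (−1)^{s+i} times itself, where ξ ∈ G has ξ^ℓ = 1 and v_1,...,v_i ∈ G. -/

import Mathlib

open scoped Classical

open Finsupp

/-- Chains of the (normalized) bar complex of `G` over `k`: the free `k`-module
on lists of elements of `G`. -/
abbrev BarChain (G : Type*) [Group G] (k : Type*) [CommRing k] := List G →₀ k

variable {G : Type*} [Group G] {k : Type*} [CommRing k]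

/-- The normalized bar symbol `[x₁|...|x_s]`: zero if some entry equals `1`. -/
noncomputable def barSym (l : List G) : BarChain G k :=
  if (1 : G) ∈ l then 0 else Finsupp.single l 1

/-- Normalization map, killing all basis lists containing `1`. -/
noncomputable def barNorm : BarChain G k →ₗ[k] BarChain G k :=
  Finsupp.lsum k fun l => LinearMap.toSpanSingleton k _ (barSym l)

/-- Merge the `j`-th and `(j+1)`-st entries of a list by multiplying them. -/
def mergeAt (l : List G) (j : ℕ) : List G :=
  l.take j ++ [l.getD j 1 * l.getD (j+1) 1] ++ l.drop (j+2)

/-- The boundary of a bar symbol (normalized convention: symbols with an entry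
equal to `1` are zero). -/
noncomputable def barDList (l : List G) : BarChain G k :=
  if l = [] then 0 else
    barSym l.tail
      + ∑ j ∈ Finset.range (l.length - 1), ((-1 : k)^(j+1)) • barSym (mergeAt l j)
      + ((-1 : k)^l.length) • barSym l.dropLast

/-- The boundary operator of the normalized bar complex. -/
noncomputable def barD : BarChain G k →ₗ[k] BarChain G k :=
  Finsupp.lsum k fun l => LinearMap.toSpanSingleton k _ (barDList l)

/-- The (signed) shuffle of two lists. -/
noncomputable def shuffleList : List G → List G → BarChain G k
  | [], l => Finsupp.single l 1
  | l, [] => Finsupp.single l 1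
  | x :: xs, y :: ys =>
      Finsupp.mapDomain (x :: ·) (shuffleList xs (y :: ys))
        + ((-1 : k)^(xs.length + 1)) • Finsupp.mapDomain (y :: ·) (shuffleList (x :: xs) ys)
  termination_by l1 l2 => l1.length + l2.length

/-- The bilinear shuffle product on bar chains. -/
noncomputable def barSh : BarChain G k →ₗ[k] BarChain G k →ₗ[k] BarChain G k :=
  Finsupp.lsum k fun l1 => LinearMap.toSpanSingleton k _
    ((Finsupp.lsum k fun l2 => LinearMap.toSpanSingleton k _ (shuffleList l1 l2) :
      BarChain G k →ₗ[k] BarChain G k))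

/-- The shuffle product in the normalized bar complex. -/
noncomputable def barNSh (a b : BarChain G k) : BarChain G k :=
  barNorm (barSh a b)

/-- The chain `[ζ]^(s) = Σ_{i₁,...,i_s = 1}^{ℓ-1} [ζ^{i₁}|ζ|...|ζ^{i_s}|ζ]`. -/
noncomputable def zetaChain (ℓ : ℕ) (ζ : G) (s : ℕ) : BarChain G k :=
  ∑ f : Fin s → Fin (ℓ - 1),
    barSym ((List.ofFn (fun j => [ζ ^ ((f j : ℕ) + 1), ζ])).flatten)

/-- The iterated shuffle product `⟨x₁,...,x_i⟩ = [x₁] ∧ ... ∧ [x_i]`. -/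
noncomputable def wedgeList (l : List G) : BarChain G k :=
  l.foldr (fun g acc => barNSh (barSym [g]) acc) (barSym [])

section Aux

variable {A : Type*} [CommGroup A] {R : Type*} [CommRing R]

/-- Basis element. -/
noncomputable abbrev bs (l : List A) : BarChain A R := Finsupp.single l 1

/-- Prepend a letter. -/
noncomputable def consL (x : A) : BarChain A R →ₗ[R] BarChain A R :=
  Finsupp.lmapDomain R R (x :: ·)

/-- Reduced product of `x` and `y` in front of a chain. -/
noncomputable def muL (x y : A) : BarChain A R →ₗ[R] BarChain A R :=
  consL (x * y) - consL x - consL y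

/-- Reduced product of `x` with the first letter, on lists. -/
noncomputable def starBist (x : A) : List A → BarChain A R
  | [] => 0
  | y :: l => muL x y (bs l)

/-- Reduced product of `x` with the first letter. -/
noncomputable def starB (x : A) : BarChain A R →ₗ[R] BarChain A R :=
  Finsupp.linearCombination R (starBist x)

/-- Recursive bar differential on lists. -/
noncomputable def dList : List A → BarChain A R
  | [] => 0
  | x :: l => - starB x (bs l) - consL x (dList l)

/-- The unnormalized bar differential, in recursive form. -/
noncomputable def dL : BarChain A R →ₗ[R] BarChain A R := Finsupp.linearCombination R dList

/-- The degree sign. -/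
noncomputable def tauL : BarChain A R →ₗ[R] BarChain A R :=
  Finsupp.linearCombination R fun l => ((-1 : R) ^ l.length) • bs l

/-- The map induced by inversion. -/
noncomputable def sigL : BarChain A R →ₗ[R] BarChain A R :=
  Finsupp.lmapDomain R R (List.map (fun g : A => g⁻¹))

theorem ext_bs {M : Type*} [AddCommMonoid M] [Module R M] {f g : BarChain A R →ₗ[R] M}
    (h : ∀ l : List A, f (bs l) = g (bs l)) : f = g :=
  Finsupp.lhom_ext' fun l => LinearMap.ext_ring (h l)

theorem consL_bs (x : A) (l : List A) : consL x (bs l : BarChain A R) = bs (x :: l) := by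
  simp [consL, bs]

theorem bs_cons (x : A) (l : List A) : (bs (x :: l) : BarChain A R) = consL x (bs l) :=
  (consL_bs x l).symm

theorem starB_nil (x : A) : starB x (bs [] : BarChain A R) = 0 := by
  simp [starB, starBist]

theorem starB_cons (x y : A) (C : BarChain A R) : starB x (consL y C) = muL x y C := by
  have : (starB x ∘ₗ consL y : BarChain A R →ₗ[R] _) = muL x y := by
    apply ext_bs; intro l
    simp only [LinearMap.comp_apply, consL_bs]
    simp [starB, starBist]
  exact LinearMap.congr_fun this C

theorem dL_nil : dL (bs [] : BarChain A R) = 0 := by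
  simp [dL, dList]

theorem dL_cons (x : A) (C : BarChain A R) :
    dL (consL x C) = - starB x C - consL x (dL C) := by
  have : (dL ∘ₗ consL x : BarChain A R →ₗ[R] _) =
      - (starB x : BarChain A R →ₗ[R] BarChain A R) - (consL x : BarChain A R →ₗ[R] BarChain A R) ∘ₗ dL := by
    apply ext_bs; intro l
    simp only [LinearMap.comp_apply, consL_bs, LinearMap.sub_apply, LinearMap.neg_apply]
    simp [dL, dList]
  exact LinearMap.congr_fun this C

theorem muL_apply (x y : A) (C : BarChain A R) :
    muL x y C = consL (x * y) C - consL x C - consL y C := rfl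

theorem muL_comm (x y : A) (C : BarChain A R) : muL x y C = muL y x C := by
  simp only [muL_apply, mul_comm x y]; abel

theorem tauL_bs (l : List A) : tauL (bs l : BarChain A R) = ((-1 : R) ^ l.length) • bs l := by
  simp [tauL]

theorem tauL_cons (x : A) (C : BarChain A R) : tauL (consL x C) = - consL x (tauL C) := by
  have : (tauL ∘ₗ consL x : BarChain A R →ₗ[R] _) =
      - ((consL x : BarChain A R →ₗ[R] BarChain A R) ∘ₗ tauL) := by
    apply ext_bs; intro l
    simp only [LinearMap.comp_apply, consL_bs, LinearMap.neg_apply, tauL_bs, map_smul]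
    simp [pow_succ]
  exact LinearMap.congr_fun this C

theorem tauL_starB (x : A) (C : BarChain A R) : tauL (starB x C) = starB x (tauL C) := by
  have : (tauL ∘ₗ starB x : BarChain A R →ₗ[R] _) = starB x ∘ₗ tauL := by
    apply ext_bs; intro l
    cases l with
    | nil => simp [starB_nil, tauL_bs]
    | cons y l =>
      simp only [LinearMap.comp_apply, bs_cons, starB_cons, tauL_cons, muL_apply, map_sub, map_neg]
      abel
  exact LinearMap.congr_fun this C

theorem tauL_dL (C : BarChain A R) : tauL (dL C) = - dL (tauL C) := by
  have : (tauL ∘ₗ dL : BarChain A R →ₗ[R] _) =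
      - ((dL : BarChain A R →ₗ[R] BarChain A R) ∘ₗ tauL) := by
    apply ext_bs; intro l
    induction l with
    | nil => simp [dL_nil, tauL_bs]
    | cons y l ih =>
      simp only [LinearMap.comp_apply, LinearMap.neg_apply] at ih ⊢
      simp only [bs_cons, dL_cons, tauL_cons, tauL_starB, map_sub, map_neg, ih]
      abel
  exact LinearMap.congr_fun this C

/-! Shuffles -/

theorem barSh_bs (a b : List A) :
    barSh (bs a : BarChain A R) (bs b) = shuffleList a b := by
  simp [barSh]

theorem sh_nil_left (C : BarChain A R) : barSh (bs []) C = C := by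
  have : (barSh (bs []) : BarChain A R →ₗ[R] _) = LinearMap.id := by
    apply ext_bs; intro l
    rw [barSh_bs, shuffleList]; rfl
  exact LinearMap.congr_fun this C

theorem sh_nil_right (C : BarChain A R) : barSh C (bs []) = C := by
  have : (barSh.flip (bs []) : BarChain A R →ₗ[R] _) = LinearMap.id := by
    apply ext_bs; intro l
    rw [LinearMap.flip_apply, barSh_bs]
    cases l <;> simp [shuffleList]
  exact LinearMap.congr_fun this C

theorem sh_cons_cons (x y : A) (C E : BarChain A R) :
    barSh (consL x C) (consL y E) =
      consL x (barSh C (consL y E)) - consL y (barSh (consL x (tauL C)) E) := by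
  have : ((barSh ∘ₗ (consL x : BarChain A R →ₗ[R] BarChain A R)).compl₂ (consL y) :
      BarChain A R →ₗ[R] BarChain A R →ₗ[R] BarChain A R) =
      ((barSh : BarChain A R →ₗ[R] BarChain A R →ₗ[R] BarChain A R).compl₂
        (consL y)).compr₂ (consL x) +
        (barSh ∘ₗ (consL x : BarChain A R →ₗ[R] BarChain A R) ∘ₗ tauL).compr₂
          (- (consL y : BarChain A R →ₗ[R] BarChain A R)) := by
    apply ext_bs; intro a
    apply ext_bs; intro b
    simp only [LinearMap.compl₂_apply, LinearMap.compr₂_apply, LinearMap.comp_apply,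
      LinearMap.add_apply, LinearMap.neg_apply, tauL_bs, map_smul, consL_bs, barSh_bs,
      LinearMap.smul_apply]
    rw [shuffleList]
    simp [consL, pow_succ, sub_eq_add_neg]
  have h := LinearMap.congr_fun₂ this C E
  rw [sub_eq_add_neg]
  exact h

theorem sh_mu_left (x u y : A) (C E : BarChain A R) :
    barSh (muL x u C) (consL y E) =
      muL x u (barSh C (consL y E)) - consL y (barSh (muL x u (tauL C)) E) := by
  simp only [muL_apply, map_sub, LinearMap.sub_apply, sh_cons_cons]
  abel

theorem sh_mu_right (x y w : A) (C E : BarChain A R) :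
    barSh (consL x C) (muL y w E) =
      consL x (barSh C (muL y w E)) - muL y w (barSh (consL x (tauL C)) E) := by
  simp only [muL_apply, map_sub, sh_cons_cons]
  abel



theorem star_sh_left (x y : A) (a : List A) (E : BarChain A R) :
    starB x (barSh (bs a) (consL y E)) = barSh (starB x (bs a)) (consL y E)
      + muL x y (barSh (tauL (bs a)) E) - consL y (barSh (starB x (tauL (bs a))) E) := by
  cases a with
  | nil => simp [sh_nil_left, starB_nil, tauL_bs, starB_cons]
  | cons u a =>
    simp only [bs_cons, starB_cons, sh_cons_cons, tauL_cons, map_sub, map_neg, sh_mu_left,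
      LinearMap.neg_apply]
    abel

theorem star_sh_right (x y : A) (b : List A) (C : BarChain A R) :
    starB y (barSh (consL x C) (bs b)) = muL y x (barSh C (bs b))
      + barSh (consL x C) (starB y (bs b)) - consL x (barSh C (starB y (bs b))) := by
  cases b with
  | nil => simp [sh_nil_right, starB_nil, starB_cons]
  | cons w b =>
    simp only [bs_cons, starB_cons, sh_cons_cons, map_sub, sh_mu_right]
    abel

theorem leibniz_bs (a b : List A) :
    dL (barSh (bs a : BarChain A R) (bs b)) =
      barSh (dL (bs a)) (bs b) + barSh (tauL (bs a)) (dL (bs b)) := by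
  induction a generalizing b with
  | nil => simp [sh_nil_left, dL_nil, tauL_bs]
  | cons x a iha =>
    induction b with
    | nil => simp [sh_nil_right, dL_nil]
    | cons y b ihb =>
      have iha' := iha (y :: b)
      have hd : tauL (dL (bs a : BarChain A R)) = - dL (tauL (bs a)) := tauL_dL _
      have hA := star_sh_left x y a (bs b : BarChain A R)
      have hB := star_sh_right x y b (bs a : BarChain A R)
      have hm := muL_comm x y (barSh (bs a : BarChain A R) (bs b))
      have ht : tauL (bs a : BarChain A R) = bs a ∨ tauL (bs a : BarChain A R) = - bs a := by
        rw [tauL_bs]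
        rcases neg_one_pow_eq_or R a.length with he | he <;> simp [he]
      clear iha
      simp only [bs_cons, tauL_cons] at iha' ihb hA hB hd ⊢
      rcases ht with ht | ht <;>
      · rw [ht] at iha' ihb hA hd
        simp only [map_neg, neg_neg, LinearMap.neg_apply] at iha' ihb hA hd
        simp only [sh_cons_cons, ht, dL_cons, map_sub, map_neg, LinearMap.sub_apply,
          LinearMap.neg_apply, iha', hA, hB, hm, hd, ihb, map_add, neg_neg]
        abel

theorem leibniz (C E : BarChain A R) :
    dL (barSh C E) = barSh (dL C) E + barSh (tauL C) (dL E) := by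
  have : (barSh.compr₂ dL : BarChain A R →ₗ[R] BarChain A R →ₗ[R] BarChain A R) =
      barSh ∘ₗ dL + (barSh ∘ₗ tauL).compl₂ dL := by
    apply ext_bs; intro a
    apply ext_bs; intro b
    exact leibniz_bs a b
  exact LinearMap.congr_fun₂ this C E

/-! Inversion -/

theorem sigL_nil : sigL (bs [] : BarChain A R) = bs [] := by simp [sigL]

theorem sigL_cons (x : A) (C : BarChain A R) : sigL (consL x C) = consL x⁻¹ (sigL C) := by
  have : (sigL ∘ₗ consL x : BarChain A R →ₗ[R] _) =
      (consL x⁻¹ : BarChain A R →ₗ[R] BarChain A R) ∘ₗ sigL := by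
    apply ext_bs; intro l
    simp [sigL, consL]
  exact LinearMap.congr_fun this C

theorem sigL_muL (x y : A) (C : BarChain A R) : sigL (muL x y C) = muL x⁻¹ y⁻¹ (sigL C) := by
  simp only [muL_apply, map_sub, sigL_cons, mul_inv]

theorem sigL_starB (x : A) (C : BarChain A R) : sigL (starB x C) = starB x⁻¹ (sigL C) := by
  have : (sigL ∘ₗ starB x : BarChain A R →ₗ[R] _) =
      (starB x⁻¹ : BarChain A R →ₗ[R] BarChain A R) ∘ₗ sigL := by
    apply ext_bs; intro l
    cases l with
    | nil => simp [starB_nil, sigL_nil]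
    | cons y l => simp only [LinearMap.comp_apply, bs_cons, starB_cons, sigL_muL, sigL_cons]
  exact LinearMap.congr_fun this C

theorem sigL_dL (C : BarChain A R) : sigL (dL C) = dL (sigL C) := by
  have : (sigL ∘ₗ dL : BarChain A R →ₗ[R] _) =
      (dL : BarChain A R →ₗ[R] BarChain A R) ∘ₗ sigL := by
    apply ext_bs; intro l
    induction l with
    | nil => simp [dL_nil, sigL_nil]
    | cons y l ih =>
      simp only [LinearMap.comp_apply] at ih ⊢
      simp only [bs_cons, dL_cons, sigL_cons, sigL_starB, map_sub, map_neg, ih]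
  exact LinearMap.congr_fun this C

theorem sigL_tauL (C : BarChain A R) : sigL (tauL C) = tauL (sigL C) := by
  have : (sigL ∘ₗ tauL : BarChain A R →ₗ[R] _) =
      (tauL : BarChain A R →ₗ[R] BarChain A R) ∘ₗ sigL := by
    apply ext_bs; intro l
    simp [tauL, sigL]
  exact LinearMap.congr_fun this C

theorem sigL_sh (C E : BarChain A R) : sigL (barSh C E) = barSh (sigL C) (sigL E) := by
  have : (barSh.compr₂ sigL : BarChain A R →ₗ[R] BarChain A R →ₗ[R] BarChain A R) =
      (barSh ∘ₗ sigL).compl₂ sigL := by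
    apply ext_bs; intro a
    apply ext_bs; intro b
    simp only [LinearMap.compl₂_apply, LinearMap.compr₂_apply, LinearMap.comp_apply]
    induction a generalizing b with
    | nil => simp [sh_nil_left, sigL_nil]
    | cons x a iha =>
      induction b with
      | nil => simp [sh_nil_right, sigL_nil]
      | cons y b ihb =>
        have iha' := iha (y :: b)
        have h := sigL_tauL (bs a : BarChain A R)
        rw [tauL_bs] at h
        simp only [bs_cons, sigL_cons] at *
        simp only [sh_cons_cons, ← h, tauL_bs, map_smul, LinearMap.smul_apply, map_sub,
          sigL_cons, iha', ihb]
  exact LinearMap.congr_fun₂ this C E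

/-- Product of homologous chains. -/
theorem hom_prod (a b a' b' c e : BarChain A R) (ε δ t : R) (ha : dL a = 0) (hb' : dL b' = 0)
    (ht : tauL a = t • a) (htt : t * t = 1)
    (h1 : a' - ε • a = dL c) (h2 : b' - δ • b = dL e) :
    ∃ f, barSh a' b' - (ε * δ) • barSh a b = dL f := by
  refine ⟨barSh c b' + (ε * t) • barSh a e, ?_⟩
  rw [map_add, map_smul, leibniz, leibniz, ha, hb', ht, ← h1, ← h2]
  simp only [map_zero, LinearMap.zero_apply, map_sub, map_smul, LinearMap.sub_apply,
    LinearMap.smul_apply, add_zero, zero_add, smul_sub, smul_smul]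
  rw [mul_assoc ε t t, htt, mul_one,
    show ε * t * (δ * t) = ε * δ * (t * t) by ring, htt, mul_one]
  abel

/-! Wedge -/

/-- Unnormalized wedge. -/
noncomputable def wedgeU : List A → BarChain A R
  | [] => bs []
  | g :: l => barSh (bs [g]) (wedgeU l)

theorem dL_single (g : A) : dL (bs [g] : BarChain A R) = 0 := by
  simp [bs_cons, dL_cons, starB_nil, dL_nil]

theorem dL_wedgeU (v : List A) : dL (wedgeU v : BarChain A R) = 0 := by
  induction v with
  | nil => exact dL_nil
  | cons g v ih => simp [wedgeU, leibniz, dL_single, ih]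

theorem sig_single (g : A) :
    ∃ e, sigL (bs [g] : BarChain A R) - (-1 : R) • bs [g] = dL e := by
  refine ⟨consL g (bs [g⁻¹]) + consL 1 (bs [1]), ?_⟩
  simp only [map_add, dL_cons, bs_cons, dL_nil, starB_cons, starB_nil, muL_apply, sigL_cons,
    sigL_nil, map_zero, neg_zero, sub_zero, mul_inv_cancel, mul_one, neg_smul, one_smul]
  abel

theorem sig_wedgeU (v : List A) :
    ∃ e, sigL (wedgeU v : BarChain A R) - ((-1 : R) ^ v.length) • wedgeU v = dL e := by
  induction v with
  | nil => exact ⟨0, by simp [wedgeU, sigL_nil]⟩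
  | cons g v ih =>
    obtain ⟨e, he⟩ := ih
    obtain ⟨c, hc⟩ := sig_single (R := R) g
    have := hom_prod (bs [g]) (wedgeU v) (sigL (bs [g])) (sigL (wedgeU v)) c e (-1)
      ((-1 : R) ^ v.length) (-1) (dL_single g) (by rw [← sigL_dL, dL_wedgeU, map_zero])
      (by simp [tauL_bs]) (by ring) hc he
    simpa only [wedgeU, sigL_sh, List.length_cons, pow_succ'] using this

/-! Zeta chains -/

/-- Sum over the powers of `ξ` in front. -/
noncomputable def powL (ℓ : ℕ) (ξ : A) : BarChain A R →ₗ[R] BarChain A R :=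
  ∑ i ∈ Finset.range ℓ, consL (ξ ^ i)

/-- Translation invariance. -/
def TInv (R : Type*) [CommRing R] (ℓ : ℕ) (ξ x : A) : Prop :=
  ∀ f : A → BarChain A R,
    ∑ i ∈ Finset.range ℓ, f (ξ ^ i * x) = ∑ i ∈ Finset.range ℓ, f (ξ ^ i)

theorem tinv_one (ℓ : ℕ) (ξ : A) : TInv R ℓ ξ 1 := fun f => by simp

theorem tinv_gen (ℓ : ℕ) (ξ : A) (h : ξ ^ ℓ = 1) : TInv R ℓ ξ ξ := fun f => by
  have h1 := Finset.sum_range_succ (fun i => f (ξ ^ i)) ℓ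
  have h2 := Finset.sum_range_succ' (fun i => f (ξ ^ i)) ℓ
  rw [h1] at h2
  simp only [h, pow_zero] at h2
  simp only [← pow_succ]
  exact (add_right_cancel h2).symm

theorem tinv_inv (ℓ : ℕ) (ξ x : A) (h : TInv R ℓ ξ x) : TInv R ℓ ξ x⁻¹ := fun f => by
  have := h (fun z => f (z * x⁻¹))
  simpa using this.symm

theorem sum_inv (ℓ : ℕ) (ξ : A) (h : ξ ^ ℓ = 1) (f : A → BarChain A R) :
    ∑ i ∈ Finset.range ℓ, f (ξ ^ i)⁻¹ = ∑ i ∈ Finset.range ℓ, f (ξ ^ i) := by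
  rw [← tinv_gen ℓ ξ h, ← Finset.sum_range_reflect (fun i => f (ξ ^ i * ξ))]
  refine Finset.sum_congr rfl fun i hi => ?_
  have hi := Finset.mem_range.1 hi
  congr 1
  rw [inv_eq_iff_mul_eq_one, ← pow_succ, ← pow_add, ← h]
  congr 1
  omega

section Z
variable (ℓ : ℕ) (ξ : A)

theorem sum_mu [CharP R ℓ] (x : A) (hx : TInv R ℓ ξ x) (C : BarChain A R) :
    ∑ i ∈ Finset.range ℓ, muL (ξ ^ i) x C = 0 := by
  simp only [muL_apply, Finset.sum_sub_distrib]
  rw [hx (fun z => consL z C)]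
  simp [← Nat.cast_smul_eq_nsmul R]

theorem star_powL [CharP R ℓ] (x : A) (hx : TInv R ℓ ξ x) (C : BarChain A R) :
    starB x (powL ℓ ξ C) = 0 := by
  simp only [powL, LinearMap.sum_apply, map_sum, starB_cons, muL_comm x]
  exact sum_mu ℓ ξ x hx C

theorem dL_powL_cons [CharP R ℓ] (x : A) (hx : TInv R ℓ ξ x) (C : BarChain A R) :
    dL (powL ℓ ξ (consL x C)) = - powL ℓ ξ (dL (consL x C)) := by
  simp only [powL, LinearMap.sum_apply, map_sum]
  simp only [dL_cons (ξ ^ _), starB_cons, Finset.sum_sub_distrib, Finset.sum_neg_distrib,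
    sum_mu ℓ ξ x hx]
  simp

/-- Unnormalized zeta chain. -/
noncomputable def zetaU (x : A) : ℕ → BarChain A R
  | 0 => bs []
  | s + 1 => powL ℓ ξ (consL x (zetaU x s))

theorem star_zetaU [CharP R ℓ] (x y : A) (hy : TInv R ℓ ξ y) (s : ℕ) :
    starB y (zetaU ℓ ξ x s : BarChain A R) = 0 := by
  cases s with
  | zero => exact starB_nil y
  | succ s => exact star_powL ℓ ξ y hy _

theorem dL_zetaU [CharP R ℓ] (x : A) (hx : TInv R ℓ ξ x) (s : ℕ) :
    dL (zetaU ℓ ξ x s : BarChain A R) = 0 := by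
  induction s with
  | zero => exact dL_nil
  | succ s ih =>
    rw [zetaU, dL_powL_cons ℓ ξ x hx, dL_cons, star_zetaU ℓ ξ x x hx, ih]
    simp

theorem tau_zetaU (x : A) (s : ℕ) :
    tauL (zetaU ℓ ξ x s : BarChain A R) = zetaU ℓ ξ x s := by
  induction s with
  | zero => simp [zetaU, tauL_bs]
  | succ s ih =>
    simp only [zetaU, powL, LinearMap.sum_apply, map_sum, tauL_cons, map_neg, neg_neg, ih]

theorem sig_zetaU (h : ξ ^ ℓ = 1) (x : A) (s : ℕ) :
    sigL (zetaU ℓ ξ x s : BarChain A R) = zetaU ℓ ξ x⁻¹ s := by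
  induction s with
  | zero => exact sigL_nil
  | succ s ih =>
    simp only [zetaU, powL, LinearMap.sum_apply, map_sum, sigL_cons, ih]
    exact sum_inv ℓ ξ h (fun z => consL z (consL x⁻¹ (zetaU ℓ ξ x⁻¹ s)))

/-- Additivity. -/
theorem zeta_add [CharP R ℓ] (x y : A) (hx : TInv R ℓ ξ x)
    (C : BarChain A R) (hs : starB y C = 0) (hd : dL C = 0) :
    dL (powL ℓ ξ (consL x (consL y C))) =
      powL ℓ ξ (consL (x * y) C) - powL ℓ ξ (consL x C) - powL ℓ ξ (consL y C) := by
  rw [dL_powL_cons ℓ ξ x hx, dL_cons, starB_cons, dL_cons, hs, hd, muL_apply]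
  simp

theorem zeta_hom [CharP R ℓ] (x : A) (hx : TInv R ℓ ξ x) (s : ℕ) :
    ∃ c : BarChain A R, (∀ y, TInv R ℓ ξ y → starB y c = 0) ∧
      zetaU ℓ ξ x⁻¹ s - ((-1 : R) ^ s) • zetaU ℓ ξ x s = dL c := by
  induction s with
  | zero => exact ⟨0, by simp, by simp [zetaU]⟩
  | succ s ih =>
    obtain ⟨c, hc, h⟩ := ih
    have hx' := tinv_inv ℓ ξ x hx
    have h1 := tinv_one (R := R) ℓ ξ
    set Z : BarChain A R := zetaU ℓ ξ x s
    have hZ : dL Z = 0 := dL_zetaU ℓ ξ x hx s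
    have e1 := zeta_add ℓ ξ x x⁻¹ hx Z (star_zetaU ℓ ξ x _ hx' s) hZ
    have e2 := zeta_add ℓ ξ 1 1 h1 Z (star_zetaU ℓ ξ x _ h1 s) hZ
    have e3 := dL_powL_cons ℓ ξ x⁻¹ hx' c
    rw [dL_cons, hc _ hx', ← h] at e3
    refine ⟨powL ℓ ξ (consL x⁻¹ c) - ((-1 : R) ^ s) • (powL ℓ ξ (consL x (consL x⁻¹ Z))
      + powL ℓ ξ (consL 1 (consL 1 Z))), ?_, ?_⟩
    · intro y hy
      simp [star_powL ℓ ξ y hy]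
    · rw [map_sub, map_smul, map_add, e1, e2, e3]
      simp only [zetaU, mul_inv_cancel, mul_one, map_sub, map_neg, map_smul, neg_zero, zero_sub,
        neg_neg]
      change _ - _ • powL ℓ ξ (consL x Z) = _
      rw [pow_succ]
      module

end Z

/-! Comparison with the normalized complex -/

theorem barNorm_bs (l : List A) : barNorm (bs l : BarChain A R) = barSym l := by
  simp [barNorm]

theorem barNorm_sig (C : BarChain A R) : barNorm (sigL C) = sigL (barNorm C) := by
  have : (barNorm ∘ₗ sigL : BarChain A R →ₗ[R] _) =
      (sigL : BarChain A R →ₗ[R] BarChain A R) ∘ₗ barNorm := by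
    apply ext_bs; intro l
    have : sigL (bs l : BarChain A R) = bs (l.map (fun g : A => g⁻¹)) := by simp [sigL]
    rw [LinearMap.comp_apply, LinearMap.comp_apply, this, barNorm_bs, barNorm_bs, barSym, barSym]
    by_cases h : (1 : A) ∈ l <;> simp [h, sigL]
  exact LinearMap.congr_fun this C

theorem barNorm_cons (x : A) (C : BarChain A R) :
    barNorm (consL x C) = if x = 1 then 0 else consL x (barNorm C) := by
  have : (barNorm ∘ₗ consL x : BarChain A R →ₗ[R] BarChain A R) =
      if x = 1 then 0 else (consL x : BarChain A R →ₗ[R] BarChain A R) ∘ₗ barNorm := by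
    apply ext_bs; intro l
    rw [LinearMap.comp_apply, consL_bs, barNorm_bs, barSym]
    by_cases h : x = 1
    · simp [h]
    · rw [if_neg h, LinearMap.comp_apply, barNorm_bs, barSym]
      by_cases h' : (1 : A) ∈ l <;> simp [h', Ne.symm h, consL]
  have := LinearMap.congr_fun this C
  rw [LinearMap.comp_apply] at this
  rw [this]
  split_ifs <;> simp

theorem barNorm_cons_norm (x : A) (C : BarChain A R) :
    barNorm (consL x (barNorm C)) = barNorm (consL x C) := by
  have : (barNorm ∘ₗ barNorm : BarChain A R →ₗ[R] BarChain A R) = barNorm := by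
    apply ext_bs; intro l
    rw [LinearMap.comp_apply, barNorm_bs]
    by_cases h : (1 : A) ∈ l
    · simp [barSym, h]
    · have : (barSym l : BarChain A R) = bs l := by simp [barSym, h]
      rw [this, barNorm_bs, this]
  have := LinearMap.congr_fun this C
  rw [LinearMap.comp_apply] at this
  rw [barNorm_cons, barNorm_cons, this]

theorem norm_sh_left (a b : List A) (h : (1 : A) ∈ a ∨ (1 : A) ∈ b) :
    barNorm (barSh (bs a : BarChain A R) (bs b)) = 0 := by
  induction a generalizing b with
  | nil =>
    rw [sh_nil_left, barNorm_bs, barSym, if_pos (by simpa using h)]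
  | cons x a iha =>
    induction b with
    | nil => rw [sh_nil_right, barNorm_bs, barSym, if_pos (by simpa using h)]
    | cons y b ihb =>
      have hy := iha (y :: b)
      simp only [bs_cons] at hy ihb ⊢
      rw [sh_cons_cons, tauL_bs]
      simp only [map_sub, map_smul, LinearMap.smul_apply, barNorm_cons]
      by_cases hx1 : x = 1 <;> by_cases hy1 : y = 1
      · simp [hx1, hy1]
      · rw [ihb (by simp [hx1])]; simp [hx1]
      · rw [hy (by simp [hy1])]; simp [hy1]
      · have : (1 : A) ∈ a ∨ (1 : A) ∈ b := by
          simpa [Ne.symm hx1, Ne.symm hy1] using h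
        rw [hy (by simp; tauto), ihb (by simp; tauto)]; simp

theorem norm_sh (C E : BarChain A R) :
    barNorm (barSh (barNorm C) (barNorm E)) = barNorm (barSh C E) := by
  have : (((barSh ∘ₗ barNorm).compl₂ barNorm).compr₂ barNorm :
      BarChain A R →ₗ[R] BarChain A R →ₗ[R] BarChain A R) = barSh.compr₂ barNorm := by
    apply ext_bs; intro a
    apply ext_bs; intro b
    simp only [LinearMap.compl₂_apply, LinearMap.compr₂_apply, LinearMap.comp_apply, barNorm_bs]
    by_cases h : (1 : A) ∈ a ∨ (1 : A) ∈ b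
    · rw [norm_sh_left a b h]
      rcases h with h | h <;> simp [barSym, h]
    · push Not at h
      simp [barSym, h]
  exact LinearMap.congr_fun₂ this C E

theorem norm_wedge (v : List A) : (wedgeList v : BarChain A R) = barNorm (wedgeU v) := by
  induction v with
  | nil => exact (barNorm_bs (A := A) (R := R) []).symm
  | cons g v ih =>
    change barNSh (barSym [g] : BarChain A R) (wedgeList v) = _
    rw [ih, barNSh, ← barNorm_bs (R := R), norm_sh, wedgeU]

theorem zetaChain_succ (ℓ : ℕ) (ξ : A) (s : ℕ) :
    (zetaChain ℓ ξ (s + 1) : BarChain A R) =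
      ∑ i ∈ Finset.range (ℓ - 1), barNorm (consL (ξ ^ (i + 1)) (consL ξ (zetaChain ℓ ξ s))) := by
  rw [Finset.sum_range, zetaChain,
    ← (Fin.consEquiv (fun _ : Fin (s + 1) => Fin (ℓ - 1))).sum_comp, Fintype.sum_prod_type]
  refine Finset.sum_congr rfl fun i _ => ?_
  rw [zetaChain, map_sum, map_sum, map_sum]
  refine Finset.sum_congr rfl fun f _ => ?_
  rw [barNorm_cons, ← barNorm_bs (R := R) (List.ofFn fun j => [ξ ^ ((f j : ℕ) + 1), ξ]).flatten,
    barNorm_cons_norm, ← barNorm_cons,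
    consL_bs, consL_bs, barNorm_bs]
  simp [Fin.consEquiv]

theorem norm_zeta (ℓ : ℕ) (hℓ : 0 < ℓ) (ξ : A) (s : ℕ) :
    (zetaChain ℓ ξ s : BarChain A R) = barNorm (zetaU ℓ ξ ξ s) := by
  induction s with
  | zero => simp [zetaChain, zetaU, barNorm_bs]
  | succ s ih =>
    obtain ⟨n, rfl⟩ : ∃ n, ℓ = n + 1 := ⟨ℓ - 1, by omega⟩
    rw [zetaChain_succ, ih, zetaU, powL, LinearMap.sum_apply, map_sum, Finset.sum_range_succ']
    have h0 : barNorm (consL (ξ ^ 0) (consL ξ (zetaU (n + 1) ξ ξ s : BarChain A R))) = 0 := by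
      rw [barNorm_cons, if_pos (pow_zero ξ)]
    rw [h0, add_zero, Nat.add_sub_cancel]
    refine Finset.sum_congr rfl fun i _ => ?_
    rw [barNorm_cons, barNorm_cons_norm, ← barNorm_cons]

theorem dList_spec (x : A) (l : List A) :
    dL (bs (x :: l) : BarChain A R) = bs l
      + ∑ j ∈ Finset.range l.length, ((-1 : R)^(j+1)) • bs (mergeAt (x :: l) j)
      + ((-1 : R)^(l.length + 1)) • bs (x :: l).dropLast := by
  induction l generalizing x with
  | nil => simp [dL_single]
  | cons y m ih =>
    have h1 : ∀ j, (bs (mergeAt (x :: y :: m) (j + 1)) : BarChain A R) =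
        consL x (bs (mergeAt (y :: m) j)) := by
      intro j; rw [consL_bs]; simp [mergeAt]
    have h2 : mergeAt (x :: y :: m) 0 = (x * y) :: m := by simp [mergeAt]
    rw [bs_cons, dL_cons, ih y, List.length_cons, Finset.sum_range_succ', h2, bs_cons y m,
      starB_cons, muL_apply, bs_cons (x * y)]
    simp only [h1, map_add, map_sum, map_smul, List.dropLast_cons_cons, bs_cons x, pow_succ _ (_ + 1),
      mul_neg, mul_one, neg_smul, Finset.sum_neg_distrib]
    simp only [zero_add, pow_one, neg_smul, one_smul]
    abel

theorem norm_dL (C : BarChain A R) : barNorm (dL C) = barD C := by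
  have : (barNorm ∘ₗ dL : BarChain A R →ₗ[R] _) = barD := by
    apply ext_bs; intro l
    have hD : barD (bs l : BarChain A R) = barDList l := by simp [barD]
    rw [LinearMap.comp_apply, hD]
    cases l with
    | nil => simp [dL_nil, barDList]
    | cons x l =>
      rw [dList_spec]
      simp only [map_add, map_sum, map_smul, barNorm_bs]
      simp [barDList]
  exact LinearMap.congr_fun this C

end Aux

/-- for `G` abelian and `σ : G → G` the inversion, the induced map
on mod `ℓ` homology sends the class of `[ξ]^(s) ∧ ⟨v₁,...,v_i⟩` to `(-1)^{s+i}`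
times itself (equality in homology expressed as "the difference is a boundary"). -/
theorem stmt10 {G : Type*} [CommGroup G] (ℓ : ℕ) (hℓ : ℓ.Prime)
    (ξ : G) (hξ : ξ ^ ℓ = 1) (s : ℕ) (v : List G) :
    ∃ c : BarChain G (ZMod ℓ),
      Finsupp.mapDomain (List.map (fun g : G => g⁻¹))
          (barNSh (zetaChain ℓ ξ s) (wedgeList v))
        - ((-1 : ZMod ℓ) ^ (s + v.length)) • barNSh (zetaChain ℓ ξ s) (wedgeList v)
        = barD c := by
  have : NeZero ℓ := ⟨hℓ.ne_zero⟩
  have hT := tinv_gen (R := ZMod ℓ) ℓ ξ hξ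
  obtain ⟨c, -, hc⟩ := zeta_hom (R := ZMod ℓ) ℓ ξ ξ hT s
  obtain ⟨e, he⟩ := sig_wedgeU (R := ZMod ℓ) v
  rw [← sig_zetaU ℓ ξ hξ] at hc
  obtain ⟨f, hf⟩ := hom_prod _ _ _ _ c e _ _ 1 (dL_zetaU ℓ ξ ξ hT s)
    (by rw [← sigL_dL, dL_wedgeU, map_zero]) (by rw [tau_zetaU, one_smul]) (by ring) hc he
  refine ⟨f, ?_⟩
  rw [← sigL_sh, ← pow_add] at hf
  rw [← norm_dL, ← hf, map_sub, map_smul, barNorm_sig, barNSh, norm_zeta ℓ hℓ.pos, norm_wedge,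
    norm_sh]
  rfl
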